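/- Let A : X → Y be bounded linear (X Banach, Y Hilbert), R convex, x† satisfy the source condition ξ = A*w ∈ ∂R(x†), and x_α minimise (1/2)‖Ax − y‖² + αR(x) where y = Ax†. Then D_ξ(x_α, x†) ≤ (‖w‖²/2)·α and ‖Ax_α − y‖ ≤ 2‖w‖·α. -/

import Mathlib

open RealInnerProductSpace

/-!
Comparing the Tikhonov functional at `u` and at `x`, and rewriting `R u - R x` through the Bregman
distance with respect to `ξ = φ ∘ A`, leaves the term `φ (A (u - x))`, which is at most
`‖φ‖ (‖A u - y‖ + ‖A x - y‖)` in absolute value. Completing the square gives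
`(‖A u - y‖ - ‖φ‖ α)² + 2 α D_ξ(u, x) ≤ (‖A x - y‖ + ‖φ‖ α)²`.
Dropping the square bounds the Bregman distance, and dropping the Bregman distance, which is
nonnegative when `ξ` is a subgradient, bounds the residual.
-/

section Tikhonov

variable {X Y : Type*} [AddCommGroup X] [Module ℝ X]

/-- The Bregman distance `D_ξ(u, x)` of `R`. It is defined for every linear functional `ξ`; that
`ξ` is a subgradient of `R` at `x` means that `D_ξ(·, x)` is nonnegative. -/
def bregmanDist (R : X → ℝ) (ξ : X →ₗ[ℝ] ℝ) (u x : X) : ℝ :=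
  R u - R x - ξ (u - x)

variable [SeminormedAddCommGroup Y] [NormedSpace ℝ Y]

/-- The Tikhonov functional for the equation `A x = y` with penalty `R` and regularisation
parameter `α`. -/
noncomputable def tikhonov (A : X →ₗ[ℝ] Y) (R : X → ℝ) (α : ℝ) (y : Y) (x : X) : ℝ :=
  1 / 2 * ‖A x - y‖ ^ 2 + α * R x

variable {A : X →ₗ[ℝ] Y} {R : X → ℝ} {α : ℝ} {y : Y} {u x : X}

theorem abs_dual_map_sub_le (A : X →ₗ[ℝ] Y) (φ : StrongDual ℝ Y) (y : Y) (u x : X) :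
    |φ (A (u - x))| ≤ ‖φ‖ * (‖A u - y‖ + ‖A x - y‖) :=
  calc |φ (A (u - x))| ≤ ‖φ‖ * ‖A (u - x)‖ := φ.le_opNorm _
    _ = ‖φ‖ * ‖(A u - y) - (A x - y)‖ := by rw [map_sub, sub_sub_sub_cancel_right]
    _ ≤ ‖φ‖ * (‖A u - y‖ + ‖A x - y‖) := by gcongr; exact norm_sub_le _ _

theorem sq_add_bregmanDist_le_of_tikhonov_le (φ : StrongDual ℝ Y) (hα : 0 ≤ α)
    (hle : tikhonov A R α y u ≤ tikhonov A R α y x) :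
    (‖A u - y‖ - ‖φ‖ * α) ^ 2 + 2 * α * bregmanDist R (φ ∘ₗ A) u x ≤
      (‖A x - y‖ + ‖φ‖ * α) ^ 2 := by
  have hpairing : α * -φ (A (u - x)) ≤ α * (‖φ‖ * (‖A u - y‖ + ‖A x - y‖)) :=
    mul_le_mul_of_nonneg_left ((neg_le_abs _).trans (abs_dual_map_sub_le A φ y u x)) hα
  have hbregman : bregmanDist R (φ ∘ₗ A) u x = R u - R x - φ (A (u - x)) := rfl
  unfold tikhonov at hle
  rw [hbregman]
  linarith

theorem bregmanDist_le_of_tikhonov_le (φ : StrongDual ℝ Y) (hα : 0 < α)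
    (hle : tikhonov A R α y u ≤ tikhonov A R α y x) :
    bregmanDist R (φ ∘ₗ A) u x ≤
      ‖A x - y‖ ^ 2 / (2 * α) + ‖φ‖ * ‖A x - y‖ + ‖φ‖ ^ 2 / 2 * α :=
  calc bregmanDist R (φ ∘ₗ A) u x ≤ (‖A x - y‖ + ‖φ‖ * α) ^ 2 / (2 * α) := by
        rw [le_div_iff₀' (by positivity)]
        exact (le_add_of_nonneg_left (sq_nonneg _)).trans
          (sq_add_bregmanDist_le_of_tikhonov_le φ hα.le hle)
    _ = ‖A x - y‖ ^ 2 / (2 * α) + ‖φ‖ * ‖A x - y‖ + ‖φ‖ ^ 2 / 2 * α := by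
        field_simp
        ring

theorem norm_residual_le_of_tikhonov_le (φ : StrongDual ℝ Y) (hα : 0 ≤ α)
    (hle : tikhonov A R α y u ≤ tikhonov A R α y x)
    (hsrc : 0 ≤ bregmanDist R (φ ∘ₗ A) u x) :
    ‖A u - y‖ ≤ ‖A x - y‖ + 2 * ‖φ‖ * α := by
  have hsq : (‖A u - y‖ - ‖φ‖ * α) ^ 2 ≤ (‖A x - y‖ + ‖φ‖ * α) ^ 2 :=
    (le_add_of_nonneg_right (by positivity)).trans
      (sq_add_bregmanDist_le_of_tikhonov_le φ hα hle)
  have hroot : ‖A u - y‖ - ‖φ‖ * α ≤ ‖A x - y‖ + ‖φ‖ * α :=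
    le_of_sq_le_sq hsq (by positivity)
  linarith

end Tikhonov

theorem stmt_11_general {X Y : Type*} [AddCommGroup X] [Module ℝ X]
    [SeminormedAddCommGroup Y] [NormedSpace ℝ Y]
    (A : X →ₗ[ℝ] Y) (R : X → ℝ) {α : ℝ} (hα : 0 < α) (y : Y) (φ : StrongDual ℝ Y) {xdag xα : X}
    (hsrc : 0 ≤ bregmanDist R (φ ∘ₗ A) xα xdag)
    (hle : tikhonov A R α y xα ≤ tikhonov A R α y xdag) :
    bregmanDist R (φ ∘ₗ A) xα xdag ≤
        ‖A xdag - y‖ ^ 2 / (2 * α) + ‖φ‖ * ‖A xdag - y‖ + ‖φ‖ ^ 2 / 2 * α ∧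
      ‖A xα - y‖ ≤ ‖A xdag - y‖ + 2 * ‖φ‖ * α :=
  ⟨bregmanDist_le_of_tikhonov_le φ hα hle, norm_residual_le_of_tikhonov_le φ hα.le hle hsrc⟩

/-- Under the source condition `ξ = A* w ∈ ∂R(x†)`, the exact-data Tikhonov
minimiser `x_α` satisfies `D_ξ(x_α, x†) ≤ (‖w‖²/2) α` and
`‖A x_α - y‖ ≤ 2 ‖w‖ α`, where `y = A x†`. -/
theorem stmt_11 {X Y : Type*} [NormedAddCommGroup X] [NormedSpace ℝ X]
    [NormedAddCommGroup Y] [InnerProductSpace ℝ Y] [CompleteSpace Y]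
    (A : X →L[ℝ] Y) (R : X → ℝ) (hR : ConvexOn ℝ Set.univ R)
    (α : ℝ) (hα : 0 < α) (xdag : X) (w : Y)
    -- source condition: `u ↦ ⟪w, A u⟫` is a subgradient of `R` at `x†`
    (hsrc : ∀ u : X, R xdag + ⟪w, A (u - xdag)⟫ ≤ R u)
    (xα : X)
    (hmin : ∀ x : X, (1 / 2) * ‖A xα - A xdag‖ ^ 2 + α * R xα ≤
      (1 / 2) * ‖A x - A xdag‖ ^ 2 + α * R x) :
    R xα - R xdag - ⟪w, A (xα - xdag)⟫ ≤ (‖w‖ ^ 2 / 2) * α ∧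
    ‖A xα - A xdag‖ ≤ 2 * ‖w‖ * α := by
  have hD : 0 ≤ bregmanDist R (innerSL ℝ w ∘ₗ (A : X →ₗ[ℝ] Y)) xα xdag :=
    sub_nonneg.2 (le_sub_iff_add_le'.2 (hsrc xα))
  simpa [bregmanDist] using
    stmt_11_general (A : X →ₗ[ℝ] Y) R hα (A xdag) (innerSL ℝ w) hD (hmin xdag)
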